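/- Let m ≥ 3, n ≥ 1, let Ω ⊆ ℝ^m be open, and let f : Ω → (0,∞) be smooth. Let φ : Ω → ℝ^n be a continuous map such that for every harmonic function u : V → ℝ on an open set V ⊆ ℝ^n with φ⁻¹(V) nonempty, the composition u∘φ is C² on φ⁻¹(V) and satisfies f·Δ(u∘φ) + ⟨∇f, ∇(u∘φ)⟩ = 0 there (i.e., φ is an f-harmonic morphism). Then φ is smooth (C^∞) on Ω. -/

import Mathlib

open scoped RealInnerProductSpace

/-- The Euclidean Laplacian of a real-valued function on `ℝ^m`. -/
noncomputable def lap {m : ℕ} (u : EuclideanSpace ℝ (Fin m) → ℝ)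
    (x : EuclideanSpace ℝ (Fin m)) : ℝ :=
  ∑ i : Fin m, fderiv ℝ (fun y => fderiv ℝ u y (EuclideanSpace.single i 1)) x
    (EuclideanSpace.single i 1)

/-!
A linear functional `ℓ` is harmonic, so `u = ℓ ∘ φ` is of class `C²` and solves
`Δu + ⟨f⁻¹ ∇f, ∇u⟩ = 0`; it suffices to prove interior regularity for this elliptic equation. If `χ`
is a cutoff function, then `Δ(χu) = χΔu + 2⟨∇χ, ∇u⟩ + (Δχ)u`, and the equation makes the right-hand
side an operator of order one in `u` with smooth coefficients. Hence, if the Fourier transforms of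
all localizations `χu` are `O((1 + ‖ξ‖)^(-s))`, those of all `Δ(χu)` are `O((1 + ‖ξ‖)^(-(s - 1)))`,
and dividing by the symbol `-(2π‖ξ‖)²` improves the decay of the former to `s + 1`. Iterating, the
decay is faster than any power, and `u` is smooth by Fourier inversion.
-/

section

open MeasureTheory FourierTransform Topology Function Asymptotics Laplacian Gradient
open scoped ContDiff

section TestFunctions

variable {E F G : Type*} [NormedAddCommGroup E] [NormedSpace ℝ E] [NormedAddCommGroup F]
  [NormedSpace ℝ F] [NormedAddCommGroup G] [NormedSpace ℝ G] {k l : WithTop ℕ∞} {χ : E → F}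
  {ψ : E → G} {Ω : Set E}

/-- `χ` is a function of class `C^k` with compact support contained in `Ω`. This is the unbundled
form of `TestFunction`, used to multiply test functions by functions defined on `Ω` only. -/
structure IsTestFunctionOn (k : WithTop ℕ∞) (χ : E → F) (Ω : Set E) : Prop where
  contDiff : ContDiff ℝ k χ
  hasCompactSupport : HasCompactSupport χ
  tsupport_subset : tsupport χ ⊆ Ω

namespace IsTestFunctionOn

theorem eq_zero (hχ : IsTestFunctionOn k χ Ω) {x : E} (hx : x ∉ Ω) : χ x = 0 :=
  image_eq_zero_of_notMem_tsupport fun hx' => hx (hχ.tsupport_subset hx')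

theorem of_le (hχ : IsTestFunctionOn k χ Ω) (hlk : l ≤ k) : IsTestFunctionOn l χ Ω :=
  ⟨hχ.contDiff.of_le hlk, hχ.hasCompactSupport, hχ.tsupport_subset⟩

theorem of_support_subset (hχ : IsTestFunctionOn k χ Ω) (hΩ : IsOpen Ω)
    (hψ : ContDiffOn ℝ l ψ Ω) (hsupp : support ψ ⊆ tsupport χ) : IsTestFunctionOn l ψ Ω := by
  have htsupp : tsupport ψ ⊆ tsupport χ := closure_minimal hsupp (isClosed_tsupport χ)
  refine ⟨contDiff_iff_contDiffAt.2 fun x => ?_,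
    hχ.hasCompactSupport.mono' hsupp, htsupp.trans hχ.tsupport_subset⟩
  by_cases hx : x ∈ tsupport ψ
  · exact hψ.contDiffAt (hΩ.mem_nhds (hχ.tsupport_subset (htsupp hx)))
  · exact contDiffAt_const.congr_of_eventuallyEq (notMem_tsupport_iff_eventuallyEq.1 hx)

theorem smul {χ : E → ℝ} (hχ : IsTestFunctionOn k χ Ω) (hΩ : IsOpen Ω)
    (hψ : ContDiffOn ℝ k ψ Ω) : IsTestFunctionOn k (fun x => χ x • ψ x) Ω :=
  hχ.of_support_subset hΩ (hχ.contDiff.contDiffOn.smul hψ)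
    ((support_smul_subset_left χ ψ).trans (subset_tsupport χ))

theorem fderiv_apply (hχ : IsTestFunctionOn k χ Ω) (hlk : l + 1 ≤ k) (e : E) :
    IsTestFunctionOn l (fun x => fderiv ℝ χ x e) Ω where
  contDiff := (hχ.contDiff.fderiv_right hlk).clm_apply contDiff_const
  hasCompactSupport := hχ.hasCompactSupport.fderiv_apply ℝ e
  tsupport_subset := (tsupport_fderiv_apply_subset ℝ e).trans hχ.tsupport_subset

theorem integrable [MeasurableSpace E] [BorelSpace E] {μ : Measure E}
    [IsFiniteMeasureOnCompacts μ] (hχ : IsTestFunctionOn k χ Ω) : Integrable χ μ :=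
  hχ.contDiff.continuous.integrable_of_hasCompactSupport hχ.hasCompactSupport

theorem integrable_iteratedFDeriv [MeasurableSpace E] [BorelSpace E] {μ : Measure E}
    [IsFiniteMeasureOnCompacts μ] (hχ : IsTestFunctionOn k χ Ω) {n : ℕ} (hn : n ≤ k) :
    Integrable (iteratedFDeriv ℝ n χ) μ :=
  (hχ.contDiff.continuous_iteratedFDeriv hn).integrable_of_hasCompactSupport
    (hχ.hasCompactSupport.iteratedFDeriv n)

end IsTestFunctionOn

theorem exists_isTestFunctionOn_eventuallyEq_one {E : Type*} [NormedAddCommGroup E]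
    [InnerProductSpace ℝ E] [FiniteDimensional ℝ E] {Ω : Set E} {x : E} (hx : Ω ∈ 𝓝 x) :
    ∃ χ : E → ℝ, IsTestFunctionOn ∞ χ Ω ∧ χ =ᶠ[𝓝 x] 1 := by
  obtain ⟨r, hr, hrΩ⟩ := Metric.nhds_basis_closedBall.mem_iff.1 hx
  let χ : ContDiffBump x := ⟨r / 2, r, half_pos hr, half_lt_self hr⟩
  exact ⟨χ, ⟨χ.contDiff, χ.hasCompactSupport, χ.tsupport_eq.trans_subset hrΩ⟩,
    χ.eventuallyEq_one⟩

end TestFunctions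

section Laplacian

variable {E F : Type*} [NormedAddCommGroup E] [InnerProductSpace ℝ E] [NormedAddCommGroup F]
  [NormedSpace ℝ F] {ι : Type*} [Fintype ι]

theorem fderiv_apply_eq_sum (e : OrthonormalBasis ι ℝ E) (u : E → F) (x w : E) :
    fderiv ℝ u x w = ∑ i, ⟪e i, w⟫ • fderiv ℝ u x (e i) := by
  conv_lhs => rw [← e.sum_repr' w]
  simp only [map_sum, map_smul]

theorem fderiv_fderiv_fun_smul_apply {χ : E → ℝ} {u : E → F} {x : E} (hχ : ContDiffAt ℝ 2 χ x)
    (hu : ContDiffAt ℝ 2 u x) (e : E) :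
    fderiv ℝ (fun y => fderiv ℝ (fun z => χ z • u z) y e) x e =
      χ x • fderiv ℝ (fun y => fderiv ℝ u y e) x e
        + (2 : ℝ) • fderiv ℝ χ x e • fderiv ℝ u x e
        + fderiv ℝ (fun y => fderiv ℝ χ y e) x e • u x := by
  have hdχ : ∀ᶠ y in 𝓝 x, DifferentiableAt ℝ χ y :=
    (hχ.eventually (by simp)).mono fun y hy => hy.differentiableAt two_ne_zero
  have hdu : ∀ᶠ y in 𝓝 x, DifferentiableAt ℝ u y :=
    (hu.eventually (by simp)).mono fun y hy => hy.differentiableAt two_ne_zero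
  have hddχ : DifferentiableAt ℝ (fun y => fderiv ℝ χ y e) x :=
    ((hχ.fderiv_right (m := 1) (by norm_num)).clm_apply contDiffAt_const).differentiableAt
      one_ne_zero
  have hddu : DifferentiableAt ℝ (fun y => fderiv ℝ u y e) x :=
    ((hu.fderiv_right (m := 1) (by norm_num)).clm_apply contDiffAt_const).differentiableAt
      one_ne_zero
  have hfst : (fun y => fderiv ℝ (fun z => χ z • u z) y e) =ᶠ[𝓝 x]
      fun y => χ y • fderiv ℝ u y e + fderiv ℝ χ y e • u y := by
    filter_upwards [hdχ, hdu] with y hχy huy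
    simp [fderiv_fun_smul hχy huy]
  rw [hfst.fderiv_eq, fderiv_fun_add (hdχ.self_of_nhds.fun_smul hddu)
      (hddχ.fun_smul hdu.self_of_nhds),
    fderiv_fun_smul hdχ.self_of_nhds hddu, fderiv_fun_smul hddχ hdu.self_of_nhds]
  simp only [add_apply, smul_apply, ContinuousLinearMap.smulRight_apply, two_smul]
  abel

variable [FiniteDimensional ℝ E]

theorem laplacian_eq_sum_fderiv_fderiv_apply {u : E → F} {x : E} (hu : ContDiffAt ℝ 2 u x)
    (e : OrthonormalBasis ι ℝ E) :
    Δ u x = ∑ i, fderiv ℝ (fun y => fderiv ℝ u y (e i)) x (e i) := by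
  have hdu : DifferentiableAt ℝ (fderiv ℝ u) x :=
    (hu.fderiv_right (m := 1) (by norm_num)).differentiableAt one_ne_zero
  simp [InnerProductSpace.laplacian_eq_iteratedFDeriv_orthonormalBasis u e,
    iteratedFDeriv_two_apply, fderiv_clm_apply hdu (differentiableAt_const _)]

theorem laplacian_fun_smul_apply {χ : E → ℝ} {u : E → F} {x : E} (hχ : ContDiffAt ℝ 2 χ x)
    (hu : ContDiffAt ℝ 2 u x) :
    Δ (fun y => χ y • u y) x = χ x • Δ u x + (2 : ℝ) • fderiv ℝ u x (∇ χ x) + Δ χ x • u x := by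
  have e := stdOrthonormalBasis ℝ E
  rw [laplacian_eq_sum_fderiv_fderiv_apply (u := fun y => χ y • u y) (hχ.smul hu) e,
    laplacian_eq_sum_fderiv_fderiv_apply hχ e, laplacian_eq_sum_fderiv_fderiv_apply hu e,
    fderiv_apply_eq_sum e]
  simp only [inner_gradient_right, conj_trivial, Finset.smul_sum, Finset.sum_smul,
    ← Finset.sum_add_distrib]
  exact Finset.sum_congr rfl fun i _ => fderiv_fderiv_fun_smul_apply hχ hu (e i)

theorem contDiffAt_laplacian {k l : WithTop ℕ∞} {u : E → F} {x : E} (hu : ContDiffAt ℝ k u x)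
    (hlk : l + 2 ≤ k) : ContDiffAt ℝ l (Δ u) x := by
  rw [InnerProductSpace.laplacian_eq_iteratedFDeriv_stdOrthonormalBasis]
  exact ContDiffAt.sum fun i _ =>
    (ContinuousMultilinearMap.apply ℝ (fun _ : Fin 2 => E) F _).contDiff.contDiffAt.comp x
      (hu.iteratedFDeriv_right (mod_cast hlk))

theorem IsTestFunctionOn.laplacian {Ω : Set E} {k l : WithTop ℕ∞} {χ : E → F}
    (hχ : IsTestFunctionOn k χ Ω) (hΩ : IsOpen Ω) (hlk : l + 2 ≤ k) :
    IsTestFunctionOn l (Δ χ) Ω := by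
  refine hχ.of_support_subset hΩ (fun x _ =>
    (contDiffAt_laplacian hχ.contDiff.contDiffAt hlk).contDiffWithinAt) fun x hx => ?_
  by_contra hxχ
  refine hx ?_
  rw [(InnerProductSpace.laplacian_congr_nhds
    (notMem_tsupport_iff_eventuallyEq.1 hxχ)).self_of_nhds]
  simp [Pi.zero_def]

theorem IsTestFunctionOn.gradient {Ω : Set E} {k l : WithTop ℕ∞} {χ : E → ℝ}
    (hχ : IsTestFunctionOn k χ Ω) (hΩ : IsOpen Ω) (hlk : l + 1 ≤ k) :
    IsTestFunctionOn l (∇ χ) Ω := by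
  refine hχ.of_support_subset hΩ (ContDiff.contDiffOn ?_) fun x hx => ?_
  · exact (InnerProductSpace.toDual ℝ E).symm.contDiff.comp (hχ.contDiff.fderiv_right hlk)
  · exact support_fderiv_subset ℝ fun h0 => hx ((LinearIsometryEquiv.map_eq_zero_iff _).2 h0)

end Laplacian

section FourierTransform

variable {E F : Type*} [NormedAddCommGroup E] [InnerProductSpace ℝ E] [FiniteDimensional ℝ E]
  [MeasurableSpace E] [BorelSpace E] [NormedAddCommGroup F] [NormedSpace ℂ F] {h : E → F}

theorem fourier_fderiv_apply (hi : Integrable h) (hd : Differentiable ℝ h)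
    (hi' : Integrable (fderiv ℝ h)) (e ξ : E) :
    𝓕 (fun x => fderiv ℝ h x e) ξ = (2 * Real.pi * Complex.I * ⟪ξ, e⟫ : ℂ) • 𝓕 h ξ := by
  rw [← Real.fourier_continuousLinearMap_apply hi', Real.fourier_fderiv hi hd hi']
  simp [VectorFourier.fourierSMulRight_apply, innerSL_apply_apply ℝ, mul_smul]

theorem fourier_laplacian (hh : ContDiff ℝ 2 h)
    (hi : ∀ n : ℕ, n ≤ 2 → Integrable (iteratedFDeriv ℝ n h)) (ξ : E) :
    𝓕 (Δ h) ξ = -((2 * Real.pi * ‖ξ‖) ^ 2) • 𝓕 h ξ := by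
  have e := stdOrthonormalBasis ℝ E
  have hsum : ∑ i, ⟪e i, ξ⟫ ^ 2 = ‖ξ‖ ^ 2 := by simpa using e.sum_sq_norm_inner_right ξ
  calc 𝓕 (Δ h) ξ = ∑ i, 𝓕 (fun x => iteratedFDeriv ℝ 2 h x ![e i, e i]) ξ := by
        rw [InnerProductSpace.laplacian_eq_iteratedFDeriv_orthonormalBasis h e]
        simp only [Real.fourier_eq, Finset.smul_sum]
        exact integral_finsetSum _ fun i _ => (Real.fourierIntegral_convergent_iff ξ).2
          ((ContinuousMultilinearMap.apply ℝ _ _ ![e i, e i]).integrable_comp (hi 2 le_rfl))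
    _ = ∑ i, 𝓕 (iteratedFDeriv ℝ 2 h) ξ ![e i, e i] := by
        simp only [Real.fourier_continuousMultilinearMap_apply (hi 2 le_rfl)]
    _ = ∑ i, (-(2 * Real.pi * ⟪e i, ξ⟫) ^ 2) • 𝓕 h ξ := by
        rw [Real.fourier_iteratedFDeriv (N := 2) hh (fun n hn => hi n (mod_cast hn)) le_rfl]
        refine Finset.sum_congr rfl fun i _ => ?_
        rw [VectorFourier.fourierPowSMulRight_apply, ← Complex.coe_smul, ← Complex.coe_smul,
          smul_smul]
        congr 1
        simp [innerSL_apply_apply ℝ, real_inner_comm, mul_pow, ← pow_two]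
    _ = -((2 * Real.pi * ‖ξ‖) ^ 2) • 𝓕 h ξ := by
        rw [← Finset.sum_smul]
        simp only [mul_pow, ← hsum, Finset.mul_sum, Finset.sum_neg_distrib]

end FourierTransform

section FourierDecay

variable {E F : Type*} [NormedAddCommGroup E] [InnerProductSpace ℝ E] [FiniteDimensional ℝ E]
  [MeasurableSpace E] [BorelSpace E] [NormedAddCommGroup F] [NormedSpace ℂ F] {h : E → F} {s t : ℝ}

variable (E F) in
/-- The integrable functions `h` with `𝓕 h = O((1 + ‖ξ‖)^(-s))`, uniformly on the whole space. The
exponent `s` measures the regularity of `h` in the bootstrap argument for elliptic equations. -/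
def fourierDecay (s : ℝ) : Submodule ℂ (E → F) where
  carrier := {h | Integrable h ∧ 𝓕 h =O[⊤] fun ξ => (1 + ‖ξ‖) ^ (-s)}
  zero_mem' := ⟨integrable_zero _ _ _, (isBigO_zero _ _).congr_left fun ξ => by
    simp [Real.fourier_eq]⟩
  add_mem' hf hg := ⟨hf.1.add hg.1, (hf.2.add hg.2).congr_left fun ξ => congrFun
    (VectorFourier.fourierIntegral_add Real.continuous_fourierChar continuous_inner
      hf.1 hg.1).symm ξ⟩
  smul_mem' c h hh := ⟨Integrable.smul (μ := volume) c hh.1,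
    (hh.2.const_smul_left c).congr_left fun ξ => congrFun
      (VectorFourier.fourierIntegral_const_smul Real.fourierChar volume (innerₗ E) h c).symm ξ⟩

theorem mem_fourierDecay_zero (hi : Integrable h) : h ∈ fourierDecay E F 0 := by
  refine ⟨hi, isBigO_top.2 ⟨∫ x, ‖h x‖, fun ξ => ?_⟩⟩
  rw [neg_zero, Real.rpow_zero, norm_one, mul_one]
  exact VectorFourier.norm_fourierIntegral_le_integral_norm Real.fourierChar volume (innerₗ E) h ξ

theorem fourierDecay_anti (hst : s ≤ t) : fourierDecay E F t ≤ fourierDecay E F s := by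
  refine fun h hh => ⟨hh.1, hh.2.trans (isBigO_top.2 ⟨1, fun ξ => ?_⟩)⟩
  have hξ : 1 ≤ 1 + ‖ξ‖ := le_add_of_nonneg_right (norm_nonneg ξ)
  rw [one_mul, Real.norm_of_nonneg (by positivity), Real.norm_of_nonneg (by positivity)]
  exact Real.rpow_le_rpow_of_exponent_le hξ (neg_le_neg hst)

theorem IsTestFunctionOn.fderiv_apply_mem_fourierDecay {Ω : Set E} (hh : IsTestFunctionOn 1 h Ω)
    (hs : h ∈ fourierDecay E F s) (e : E) :
    (fun x => fderiv ℝ h x e) ∈ fourierDecay E F (s - 1) := by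
  refine ⟨(hh.fderiv_apply (l := 0) (by simp) e).integrable, ?_⟩
  have hsymbol : (fun ξ => (2 * Real.pi * Complex.I * ⟪ξ, e⟫ : ℂ)) =O[⊤] fun ξ => 1 + ‖ξ‖ := by
    refine isBigO_top.2 ⟨2 * Real.pi * ‖e‖, fun ξ => ?_⟩
    calc ‖(2 * Real.pi * Complex.I * ⟪ξ, e⟫ : ℂ)‖ = 2 * Real.pi * ‖⟪ξ, e⟫‖ := by
          simp [Real.pi_nonneg]
      _ ≤ 2 * Real.pi * (‖ξ‖ * ‖e‖) := by gcongr; exact norm_inner_le_norm ξ e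
      _ ≤ 2 * Real.pi * ‖e‖ * ‖1 + ‖ξ‖‖ := by
          rw [Real.norm_of_nonneg (by positivity : 0 ≤ 1 + ‖ξ‖)]
          nlinarith [mul_nonneg Real.pi_nonneg (norm_nonneg e)]
  refine (hsymbol.smul hs.2).congr (fun ξ => ?_) fun ξ => ?_
  · exact (fourier_fderiv_apply hh.integrable (hh.contDiff.differentiable one_ne_zero)
      ((hh.contDiff.continuous_fderiv one_ne_zero).integrable_of_hasCompactSupport
        (hh.hasCompactSupport.fderiv ℝ)) e ξ).symm
  · rw [smul_eq_mul, mul_comm, ← Real.rpow_add_one (by positivity)]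
    congr 1
    ring

theorem IsTestFunctionOn.mem_fourierDecay_add_two {Ω : Set E} (hh : IsTestFunctionOn 2 h Ω)
    (hs : h ∈ fourierDecay E F s) (hΔ : Δ h ∈ fourierDecay E F s) :
    h ∈ fourierDecay E F (s + 2) := by
  refine ⟨hs.1, ?_⟩
  have hsq : (fun ξ => (1 + ‖ξ‖) ^ 2 • 𝓕 h ξ) =O[⊤] fun ξ => (1 + ‖ξ‖) ^ (-s) := by
    refine IsBigO.trans (isBigO_top.2 ⟨2, fun ξ => ?_⟩) (hs.2.norm_left.add hΔ.2.norm_left)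
    have hlap : ‖𝓕 (Δ h) ξ‖ = (2 * Real.pi * ‖ξ‖) ^ 2 * ‖𝓕 h ξ‖ := by
      rw [fourier_laplacian hh.contDiff fun n hn => hh.integrable_iteratedFDeriv (mod_cast hn),
        norm_smul, norm_neg, Real.norm_of_nonneg (by positivity)]
    have hξ : ‖ξ‖ ≤ 2 * Real.pi * ‖ξ‖ := by nlinarith [Real.pi_gt_three, norm_nonneg ξ]
    calc ‖(1 + ‖ξ‖) ^ 2 • 𝓕 h ξ‖ = (1 + ‖ξ‖) ^ 2 * ‖𝓕 h ξ‖ := by simp [norm_smul]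
      _ ≤ 2 * (1 + (2 * Real.pi * ‖ξ‖) ^ 2) * ‖𝓕 h ξ‖ := by
          gcongr
          nlinarith [pow_le_pow_left₀ (norm_nonneg ξ) hξ 2, sq_nonneg (1 - ‖ξ‖)]
      _ = 2 * (‖𝓕 h ξ‖ + ‖𝓕 (Δ h) ξ‖) := by rw [hlap]; ring
      _ ≤ 2 * ‖‖𝓕 h ξ‖ + ‖𝓕 (Δ h) ξ‖‖ := by gcongr; exact Real.le_norm_self _
  refine ((isBigO_refl (fun ξ : E => ((1 + ‖ξ‖) ^ 2)⁻¹) ⊤).smul hsq).congr (fun ξ => ?_) fun ξ => ?_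
  · exact inv_smul_smul₀ (by positivity) _
  · rw [smul_eq_mul, neg_add, Real.rpow_add (by positivity), Real.rpow_neg (by positivity) 2,
      Real.rpow_two, mul_comm]

theorem integrable_norm_pow_mul_norm_fourier {k : ℕ}
    (hs : h ∈ fourierDecay E F (k + Module.finrank ℝ E + 1)) :
    Integrable fun ξ => ‖ξ‖ ^ k * ‖𝓕 h ξ‖ := by
  have hcont : Continuous (𝓕 h) := VectorFourier.fourierIntegral_continuous
    Real.continuous_fourierChar continuous_inner hs.1
  have hint : Integrable fun ξ : E => (1 + ‖ξ‖) ^ (-(Module.finrank ℝ E + 1 : ℝ)) :=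
    integrable_one_add_norm (lt_add_one _)
  have hO : (fun ξ => ‖ξ‖ ^ k * ‖𝓕 h ξ‖) =O[⊤]
      fun ξ : E => (1 + ‖ξ‖) ^ (-(Module.finrank ℝ E + 1 : ℝ)) := by
    have hk : (fun ξ : E => ‖ξ‖ ^ k) =O[⊤] fun ξ : E => (1 + ‖ξ‖) ^ k :=
      isBigO_top.2 ⟨1, fun ξ => by
        rw [one_mul, Real.norm_of_nonneg (by positivity), Real.norm_of_nonneg (by positivity)]
        gcongr
        exact le_add_of_nonneg_left zero_le_one⟩
    refine (hk.mul hs.2.norm_left).congr_right fun ξ => ?_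
    rw [← Real.rpow_natCast, ← Real.rpow_add (by positivity)]
    congr 1
    ring
  obtain ⟨C, hC⟩ := isBigO_top.1 hO
  exact (hint.norm.const_mul C).mono' (by fun_prop) (.of_forall hC)

theorem contDiff_of_forall_mem_fourierDecay [CompleteSpace F] (hc : Continuous h)
    (hs : ∀ k : ℕ, h ∈ fourierDecay E F k) : ContDiff ℝ ∞ h := by
  have hint (k : ℕ) : Integrable fun ξ => ‖ξ‖ ^ k * ‖𝓕 h ξ‖ :=
    integrable_norm_pow_mul_norm_fourier (mod_cast hs (k + Module.finrank ℝ E + 1))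
  have hcont : Continuous (𝓕 h) := VectorFourier.fourierIntegral_continuous
    Real.continuous_fourierChar continuous_inner (hs 0).1
  have hint0 : Integrable (𝓕 h) := (integrable_norm_iff hcont.aestronglyMeasurable).1
    (by simpa only [pow_zero, one_mul] using hint 0)
  have hinv : h = fun x => 𝓕 (𝓕 h) (-x) := funext fun x => by
    rw [← Real.fourierInv_eq_fourier_neg, hc.fourierInv_fourier_eq (hs 0).1 hint0]
  rw [hinv]
  exact (Real.contDiff_fourier fun k _ => hint k).comp contDiff_neg

end FourierDecay

section LocalFourierDecay

variable {E F : Type*} [NormedAddCommGroup E] [InnerProductSpace ℝ E] [FiniteDimensional ℝ E]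
  [MeasurableSpace E] [BorelSpace E] [NormedAddCommGroup F] [NormedSpace ℂ F] {v : E → F} {s t : ℝ}
  {Ω : Set E}

variable (F) in
/-- The functions `v` all of whose localizations `χ • v`, for `χ` a test function on `Ω`, belong to
`fourierDecay E F s`. -/
def localFourierDecay (s : ℝ) (Ω : Set E) : Submodule ℂ (E → F) where
  carrier := {v | ∀ χ : E → ℝ, IsTestFunctionOn ∞ χ Ω → (fun x => χ x • v x) ∈ fourierDecay E F s}
  zero_mem' χ _ := by
    simp only [Pi.zero_apply, smul_zero]
    exact zero_mem _
  add_mem' hv hw χ hχ := by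
    simp only [Pi.add_apply, smul_add]
    exact add_mem (hv χ hχ) (hw χ hχ)
  smul_mem' c v hv χ hχ := by
    simp only [Pi.smul_apply, smul_comm _ c]
    exact Submodule.smul_mem _ c (hv χ hχ)

theorem localFourierDecay_anti (hst : s ≤ t) : localFourierDecay F t Ω ≤ localFourierDecay F s Ω :=
  fun _ hv χ hχ => fourierDecay_anti hst (hv χ hχ)

theorem mem_localFourierDecay_zero (hΩ : IsOpen Ω) (hv : ContinuousOn v Ω) :
    v ∈ localFourierDecay F 0 Ω := fun _ hχ =>
  mem_fourierDecay_zero ((hχ.of_le zero_le).smul hΩ (contDiffOn_zero.2 hv)).integrable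

theorem smul_mem_localFourierDecay {c : E → ℝ} (hΩ : IsOpen Ω) (hc : ContDiffOn ℝ ∞ c Ω)
    (hv : v ∈ localFourierDecay F s Ω) : (fun x => c x • v x) ∈ localFourierDecay F s Ω := by
  intro χ hχ
  simpa only [smul_smul, smul_eq_mul] using hv _ (hχ.smul hΩ hc)

theorem fderiv_apply_const_mem_localFourierDecay (hΩ : IsOpen Ω) (hv : ContDiffOn ℝ 1 v Ω)
    (hs : v ∈ localFourierDecay F s Ω) (e : E) :
    (fun x => fderiv ℝ v x e) ∈ localFourierDecay F (s - 1) Ω := by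
  intro χ hχ
  have hχv : IsTestFunctionOn 1 (fun x => χ x • v x) Ω := (hχ.of_le ENat.LEInfty.out).smul hΩ hv
  have hdχ : IsTestFunctionOn ∞ (fun x => fderiv ℝ χ x e) Ω := hχ.fderiv_apply le_rfl e
  have hleibniz : (fun x => χ x • fderiv ℝ v x e) =
      (fun x => fderiv ℝ (fun y => χ y • v y) x e) - fun x => fderiv ℝ χ x e • v x := by
    ext x
    by_cases hx : x ∈ Ω
    · have hvx : DifferentiableAt ℝ v x :=
        (hv.contDiffAt (hΩ.mem_nhds hx)).differentiableAt one_ne_zero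
      simp [fderiv_fun_smul (hχ.contDiff.differentiable (by simp) x) hvx]
    · simp [hχ.eq_zero hx, hdχ.eq_zero hx, (hχv.fderiv_apply (l := 0) (by simp) e).eq_zero hx]
  rw [hleibniz]
  exact sub_mem (hχv.fderiv_apply_mem_fourierDecay (hs χ hχ) e)
    (fourierDecay_anti (sub_one_lt s).le (hs _ hdχ))

theorem fderiv_apply_mem_fourierDecay {B : E → E} (hΩ : IsOpen Ω) (hv : ContDiffOn ℝ 1 v Ω)
    (hs : v ∈ localFourierDecay F s Ω) (hB : IsTestFunctionOn ∞ B Ω) :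
    (fun x => fderiv ℝ v x (B x)) ∈ fourierDecay E F (s - 1) := by
  have e := stdOrthonormalBasis ℝ E
  have hcoord (i) : IsTestFunctionOn ∞ (fun x => ⟪e i, B x⟫) Ω :=
    hB.of_support_subset hΩ (contDiff_const.inner ℝ hB.contDiff).contDiffOn fun x hx =>
      subset_tsupport B fun h0 => hx (by simp [h0])
  have hsum : (fun x => fderiv ℝ v x (B x)) = ∑ i, fun x => ⟪e i, B x⟫ • fderiv ℝ v x (e i) := by
    ext x
    rw [Finset.sum_apply, fderiv_apply_eq_sum e]
  rw [hsum]
  exact sum_mem fun i _ => fderiv_apply_const_mem_localFourierDecay hΩ hv hs (e i) _ (hcoord i)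

theorem fderiv_apply_mem_localFourierDecay {b : E → E} (hΩ : IsOpen Ω) (hv : ContDiffOn ℝ 1 v Ω)
    (hs : v ∈ localFourierDecay F s Ω) (hb : ContDiffOn ℝ ∞ b Ω) :
    (fun x => fderiv ℝ v x (b x)) ∈ localFourierDecay F (s - 1) Ω := by
  intro χ hχ
  simpa only [map_smul] using fderiv_apply_mem_fourierDecay hΩ hv hs (hχ.smul hΩ hb)

theorem mem_localFourierDecay_add_one (hΩ : IsOpen Ω) (hv : ContDiffOn ℝ 2 v Ω)
    (hs : v ∈ localFourierDecay F s Ω) (hΔ : Δ v ∈ localFourierDecay F (s - 1) Ω) :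
    v ∈ localFourierDecay F (s + 1) Ω := by
  intro χ hχ
  have hle : s - 1 ≤ s := (sub_one_lt s).le
  have hχv : IsTestFunctionOn 2 (fun x => χ x • v x) Ω := (hχ.of_le ENat.LEInfty.out).smul hΩ hv
  have hΔχ : IsTestFunctionOn ∞ (Δ χ) Ω := hχ.laplacian hΩ le_rfl
  have hgradχ : IsTestFunctionOn ∞ (∇ χ) Ω := hχ.gradient hΩ le_rfl
  have hleibniz : Δ (fun x => χ x • v x) = (fun x => χ x • Δ v x)
      + (2 : ℝ) • (fun x => fderiv ℝ v x (∇ χ x)) + fun x => Δ χ x • v x := by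
    ext x
    by_cases hx : x ∈ Ω
    · exact laplacian_fun_smul_apply (hχ.contDiff.contDiffAt.of_le ENat.LEInfty.out)
        (hv.contDiffAt (hΩ.mem_nhds hx))
    · simp [hχ.eq_zero hx, hgradχ.eq_zero hx, hΔχ.eq_zero hx,
        (hχv.laplacian (l := 0) hΩ (by simp)).eq_zero hx]
  have hΔχv : Δ (fun x => χ x • v x) ∈ fourierDecay E F (s - 1) := by
    rw [hleibniz]
    exact add_mem (add_mem (hΔ χ hχ) (Submodule.smul_of_tower_mem _ _
      (fderiv_apply_mem_fourierDecay hΩ (hv.of_le one_le_two) hs hgradχ)))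
      (fourierDecay_anti hle (hs _ hΔχ))
  have hgain := hχv.mem_fourierDecay_add_two (fourierDecay_anti hle (hs χ hχ)) hΔχv
  rwa [show s - 1 + 2 = s + 1 by ring] at hgain

theorem mem_localFourierDecay_of_contDiffOn (hΩ : IsOpen Ω) (hv : ContDiffOn ℝ ∞ v Ω) (s : ℝ) :
    v ∈ localFourierDecay F s Ω := by
  suffices hnat : ∀ k : ℕ, v ∈ localFourierDecay F k Ω by
    obtain ⟨k, hk⟩ := exists_nat_ge s
    exact localFourierDecay_anti hk (hnat k)
  intro k
  induction k generalizing v with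
  | zero => exact mod_cast mem_localFourierDecay_zero hΩ hv.continuousOn
  | succ k ih =>
    have hΔv : ContDiffOn ℝ ∞ (Δ v) Ω := fun x hx =>
      (contDiffAt_laplacian (hv.contDiffAt (hΩ.mem_nhds hx)) le_rfl).contDiffWithinAt
    rw [Nat.cast_succ]
    exact mem_localFourierDecay_add_one hΩ (hv.of_le ENat.LEInfty.out) (ih hv)
      (localFourierDecay_anti (sub_one_lt _).le (ih hΔv))

theorem contDiffOn_of_forall_mem_localFourierDecay [CompleteSpace F] (hΩ : IsOpen Ω)
    (hv : ContinuousOn v Ω) (hs : ∀ k : ℕ, v ∈ localFourierDecay F k Ω) : ContDiffOn ℝ ∞ v Ω := by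
  intro x hx
  obtain ⟨χ, hχ, hχx⟩ := exists_isTestFunctionOn_eventuallyEq_one (hΩ.mem_nhds hx)
  have hχv : ContDiff ℝ ∞ fun y => χ y • v y :=
    contDiff_of_forall_mem_fourierDecay
      ((hχ.of_le zero_le).smul hΩ (contDiffOn_zero.2 hv)).contDiff.continuous fun k => hs k χ hχ
  refine (hχv.contDiffAt.congr_of_eventuallyEq ?_).contDiffWithinAt
  filter_upwards [hχx] with y hy
  simp [hy]

end LocalFourierDecay

theorem contDiffOn_infty_of_elliptic {E F : Type*} [NormedAddCommGroup E] [InnerProductSpace ℝ E]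
    [FiniteDimensional ℝ E] [NormedAddCommGroup F] [NormedSpace ℂ F] [CompleteSpace F] {Ω : Set E}
    (hΩ : IsOpen Ω) {b : E → E} (hb : ContDiffOn ℝ ∞ b Ω) {c : E → ℝ} (hc : ContDiffOn ℝ ∞ c Ω)
    {v : E → F} (hv : ContDiffOn ℝ 2 v Ω)
    (hLv : ContDiffOn ℝ ∞ (fun x => Δ v x + fderiv ℝ v x (b x) + c x • v x) Ω) :
    ContDiffOn ℝ ∞ v Ω := by
  borelize E
  refine contDiffOn_of_forall_mem_localFourierDecay hΩ hv.continuousOn fun k => ?_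
  induction k with
  | zero => exact mod_cast mem_localFourierDecay_zero hΩ hv.continuousOn
  | succ k ih =>
    have hΔ : Δ v = (fun x => Δ v x + fderiv ℝ v x (b x) + c x • v x)
        - (fun x => fderiv ℝ v x (b x)) - fun x => c x • v x := by
      ext x
      simp only [Pi.sub_apply]
      abel
    rw [Nat.cast_succ]
    refine mem_localFourierDecay_add_one hΩ hv ih ?_
    rw [hΔ]
    exact sub_mem (sub_mem (mem_localFourierDecay_of_contDiffOn hΩ hLv _)
      (fderiv_apply_mem_localFourierDecay hΩ (hv.of_le one_le_two) ih hb))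
      (localFourierDecay_anti (sub_one_lt _).le (smul_mem_localFourierDecay hΩ hc ih))

theorem contDiffOn_infty_real_of_elliptic {E : Type*} [NormedAddCommGroup E] [InnerProductSpace ℝ E]
    [FiniteDimensional ℝ E] {Ω : Set E} (hΩ : IsOpen Ω) {b : E → E} (hb : ContDiffOn ℝ ∞ b Ω)
    {c : E → ℝ} (hc : ContDiffOn ℝ ∞ c Ω) {u : E → ℝ} (hu : ContDiffOn ℝ 2 u Ω)
    (hLu : ContDiffOn ℝ ∞ (fun x => Δ u x + fderiv ℝ u x (b x) + c x * u x) Ω) :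
    ContDiffOn ℝ ∞ u Ω := by
  have hLv : ContDiffOn ℝ ∞ (fun x => Δ (Complex.ofRealCLM ∘ u) x
      + fderiv ℝ (Complex.ofRealCLM ∘ u) x (b x) + c x • (Complex.ofRealCLM ∘ u) x) Ω := by
    refine (Complex.ofRealCLM.contDiff.comp_contDiffOn hLu).congr fun x hx => ?_
    have hux : ContDiffAt ℝ 2 u x := hu.contDiffAt (hΩ.mem_nhds hx)
    have hfderiv : fderiv ℝ (Complex.ofRealCLM ∘ u) x = Complex.ofRealCLM.comp (fderiv ℝ u x) :=
      (Complex.ofRealCLM.hasFDerivAt.comp x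
        (hux.differentiableAt two_ne_zero).hasFDerivAt).fderiv
    simp [hux.laplacian_CLM_comp_left, hfderiv]
  exact Complex.reCLM.contDiff.comp_contDiffOn
    (contDiffOn_infty_of_elliptic hΩ hb hc (Complex.ofRealCLM.contDiff.comp_contDiffOn hu) hLv)

section FHarmonic

variable {E F : Type*} [NormedAddCommGroup E] [InnerProductSpace ℝ E] [FiniteDimensional ℝ E]
  [NormedAddCommGroup F] [NormedSpace ℝ F] [FiniteDimensional ℝ F] {f : E → ℝ} {Ω : Set E}

/-- `u` is `f`-harmonic on `s`: it is a classical solution of `f Δu + ⟨∇f, ∇u⟩ = 0`, the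
Euler-Lagrange equation of the weighted Dirichlet energy `∫ f |∇u|²`. -/
structure IsFHarmonicOn (f u : E → ℝ) (s : Set E) : Prop where
  contDiffOn : ContDiffOn ℝ 2 u s
  equation : ∀ x ∈ s, f x * Δ u x + ⟪∇ f x, ∇ u x⟫ = 0

theorem IsFHarmonicOn.contDiffOn_infty {u : E → ℝ} (hu : IsFHarmonicOn f u Ω) (hΩ : IsOpen Ω)
    (hf : ContDiffOn ℝ ∞ f Ω) (hf0 : ∀ x ∈ Ω, f x ≠ 0) : ContDiffOn ℝ ∞ u Ω := by
  have hgrad : ContDiffOn ℝ ∞ (∇ f) Ω :=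
    (InnerProductSpace.toDual ℝ E).symm.contDiff.comp_contDiffOn (hf.fderiv_of_isOpen hΩ le_rfl)
  refine contDiffOn_infty_real_of_elliptic hΩ ((hf.inv hf0).smul hgrad) (c := 0) contDiffOn_const
    hu.contDiffOn ((contDiffOn_const (c := 0)).congr fun x hx => ?_)
  have hx0 := hu.equation x hx
  rw [inner_gradient_right, conj_trivial] at hx0
  calc Δ u x + fderiv ℝ u x ((f x)⁻¹ • ∇ f x) + 0 * u x
      = (f x)⁻¹ * (f x * Δ u x + fderiv ℝ u x (∇ f x)) := by
        rw [map_smul, smul_eq_mul, mul_add, inv_mul_cancel_left₀ (hf0 x hx), zero_mul, add_zero]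
    _ = 0 := by rw [hx0, mul_zero]

theorem stmt9_general (hΩ : IsOpen Ω) (hf : ContDiffOn ℝ ∞ f Ω) (hf0 : ∀ x ∈ Ω, f x ≠ 0)
    {φ : E → F} (hφ : ∀ ℓ : F →L[ℝ] ℝ, IsFHarmonicOn f (fun x => ℓ (φ x)) Ω) :
    ContDiffOn ℝ ∞ φ Ω := by
  rw [← (toEuclidean : F ≃L[ℝ] _).comp_contDiffOn_iff, contDiffOn_euclidean]
  exact fun i => (hφ ((EuclideanSpace.proj i).comp
    (toEuclidean : F ≃L[ℝ] _).toContinuousLinearMap)).contDiffOn_infty hΩ hf hf0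

end FHarmonic

section EuclideanSpace

variable {m n : ℕ}

theorem lap_eq_laplacian {u : EuclideanSpace ℝ (Fin m) → ℝ} {x : EuclideanSpace ℝ (Fin m)}
    (hu : ContDiffAt ℝ 2 u x) : lap u x = Δ u x := by
  simp [lap, laplacian_eq_sum_fderiv_fderiv_apply hu (EuclideanSpace.basisFun (Fin m) ℝ)]

theorem lap_continuousLinearMap (ℓ : EuclideanSpace ℝ (Fin m) →L[ℝ] ℝ)
    (x : EuclideanSpace ℝ (Fin m)) : lap ℓ x = 0 := by
  simp [lap]

/-- `φ` is an `f`-harmonic morphism on `Ω`: it pulls back harmonic functions, defined on arbitrary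
open subsets of the target, to `f`-harmonic functions. -/
def IsFHarmonicMorphismOn (f : EuclideanSpace ℝ (Fin m) → ℝ)
    (φ : EuclideanSpace ℝ (Fin m) → EuclideanSpace ℝ (Fin n))
    (Ω : Set (EuclideanSpace ℝ (Fin m))) : Prop :=
  ∀ V : Set (EuclideanSpace ℝ (Fin n)), IsOpen V →
    ∀ u : EuclideanSpace ℝ (Fin n) → ℝ, ContDiffOn ℝ 2 u V → (∀ y ∈ V, lap u y = 0) →
      (Ω ∩ φ ⁻¹' V).Nonempty →
      ContDiffOn ℝ 2 (fun y => u (φ y)) (Ω ∩ φ ⁻¹' V) ∧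
      ∀ x ∈ Ω ∩ φ ⁻¹' V, f x * lap (fun y => u (φ y)) x + ⟪∇ f x, ∇ (fun y => u (φ y)) x⟫ = 0

theorem IsFHarmonicMorphismOn.isFHarmonicOn_clm_comp {f : EuclideanSpace ℝ (Fin m) → ℝ}
    {φ : EuclideanSpace ℝ (Fin m) → EuclideanSpace ℝ (Fin n)}
    {Ω : Set (EuclideanSpace ℝ (Fin m))} (hφ : IsFHarmonicMorphismOn f φ Ω) (hΩ : IsOpen Ω)
    (ℓ : EuclideanSpace ℝ (Fin n) →L[ℝ] ℝ) : IsFHarmonicOn f (fun x => ℓ (φ x)) Ω := by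
  obtain rfl | hne := Ω.eq_empty_or_nonempty
  · exact ⟨contDiffOn_empty, fun x hx => hx.elim⟩
  obtain ⟨hC2, heq⟩ := hφ Set.univ isOpen_univ ℓ ℓ.contDiff.contDiffOn
    (fun y _ => lap_continuousLinearMap ℓ y) (by simpa using hne)
  rw [Set.preimage_univ, Set.inter_univ] at hC2 heq
  refine ⟨hC2, fun x hx => ?_⟩
  rw [← lap_eq_laplacian (hC2.contDiffAt (hΩ.mem_nhds hx))]
  exact heq x hx

end EuclideanSpace

end

/-- Regularity: for `m ≥ 3`, an `f`-harmonic morphism is smooth. -/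
theorem stmt9 {m n : ℕ} (hm : 3 ≤ m) (hn : 1 ≤ n)
    (Ω : Set (EuclideanSpace ℝ (Fin m))) (hΩ : IsOpen Ω)
    (f : EuclideanSpace ℝ (Fin m) → ℝ) (hf : ContDiffOn ℝ (⊤ : ℕ∞) f Ω)
    (hfpos : ∀ x ∈ Ω, 0 < f x)
    (φ : EuclideanSpace ℝ (Fin m) → EuclideanSpace ℝ (Fin n))
    (hφc : ContinuousOn φ Ω)
    -- `φ` is an `f`-harmonic morphism: it pulls back harmonic functions to
    -- `f`-harmonic functions
    (hmor : ∀ V : Set (EuclideanSpace ℝ (Fin n)), IsOpen V →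
      ∀ u : EuclideanSpace ℝ (Fin n) → ℝ, ContDiffOn ℝ 2 u V →
      (∀ y ∈ V, lap u y = 0) →
      (Ω ∩ φ ⁻¹' V).Nonempty →
      ContDiffOn ℝ 2 (fun y => u (φ y)) (Ω ∩ φ ⁻¹' V) ∧
      ∀ x ∈ Ω ∩ φ ⁻¹' V,
        f x * lap (fun y => u (φ y)) x +
          ⟪gradient f x, gradient (fun y => u (φ y)) x⟫ = 0) :
    -- then `φ` is smooth on `Ω`
    ContDiffOn ℝ (⊤ : ℕ∞) φ Ω :=
  stmt9_general hΩ hf (fun x hx => (hfpos x hx).ne')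
    (IsFHarmonicMorphismOn.isFHarmonicOn_clm_comp hmor hΩ)
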